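/- arXiv:1507.04471 — 3 statements merged into one kernel-verified Lean document; each statement's English description precedes it below -/
import Mathlib

section
/- Let n ≥ 3. A nontrivial 1-cycle Z on [n] over F_2 is the boundary of a 2-hypertree on [n] if and only if |Z| ≡ C(n-1,2) (mod 2). -/
open Finset symmDiff

/-- The vertex set `[n] = {1, …, n}`. -/
def rng (n : ℕ) : Finset ℕ := Finset.Icc 1 n

/-- The set of `d`-simplices (i.e. `(d+1)`-element subsets) on the vertex set `V`. -/
def simplices (V : Finset ℕ) (d : ℕ) : Finset (Finset ℕ) :=
  V.powerset.filter fun σ => σ.card = d + 1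

/-- The mod-2 boundary of a set `X` of simplices: the set of faces `τ` of codimension one
(`|τ| + 1 = |σ|`) contained in an odd number of members of `X`. -/
def bd (X : Finset (Finset ℕ)) : Finset (Finset ℕ) :=
  (X.biUnion fun σ => σ.powerset).filter
    fun τ => Odd (X.filter fun σ => τ ⊆ σ ∧ τ.card + 1 = σ.card).card

/-- A set of simplices is acyclic (a forest) over `F_2` if no nonempty subset has
empty boundary. -/
def IsAcyclic (F : Finset (Finset ℕ)) : Prop :=
  ∀ Y ⊆ F, Y ≠ ∅ → bd Y ≠ ∅

/-- A `d`-hypertree on `V`: a maximal acyclic set of `d`-simplices on `V`. -/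
def IsHypertreeOn (V : Finset ℕ) (d : ℕ) (T : Finset (Finset ℕ)) : Prop :=
  T ⊆ simplices V d ∧ IsAcyclic T ∧
    ∀ G, T ⊆ G → G ⊆ simplices V d → IsAcyclic G → G = T

/-- A simple cycle over `F_2`: a nonempty set with empty boundary, no nonempty proper
subset of which has empty boundary. -/
def IsSimpleCycle (Z : Finset (Finset ℕ)) : Prop :=
  Z ≠ ∅ ∧ bd Z = ∅ ∧ ∀ Y ⊂ Z, Y ≠ ∅ → bd Y ≠ ∅

/-- Collapsibility: `X` can be reduced to `∅` by repeatedly removing a simplex `σ ∈ X`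
containing a codimension-one face contained in no other current member of `X`. -/
inductive Collapsible : Finset (Finset ℕ) → Prop
  | empty : Collapsible ∅
  | step (X : Finset (Finset ℕ)) (σ τ : Finset ℕ) (hσ : σ ∈ X) (hτ : τ ⊆ σ)
      (hcard : τ.card + 1 = σ.card) (huniq : ∀ σ' ∈ X, τ ⊆ σ' → σ' = σ)
      (h : Collapsible (X.erase σ)) : Collapsible X

/-- The cone over `X` with apex `v`. -/
def cone (v : ℕ) (X : Finset (Finset ℕ)) : Finset (Finset ℕ) :=
  X.image (insert v)

/-- The link of the vertex `v` in `X`. -/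
def link (v : ℕ) (X : Finset (Finset ℕ)) : Finset (Finset ℕ) :=
  (X.filter fun σ => v ∈ σ).image fun σ => σ.erase v

/-- `fill Z T`: the subset `F ⊆ T` with `∂F = Z` (when it exists; it is unique when `T`
is a hypertree and `Z` a cycle). -/
noncomputable def fill (Z T : Finset (Finset ℕ)) : Finset (Finset ℕ) :=
  if h : ∃ F, F ⊆ T ∧ bd F = Z then h.choose else ∅

/-- The average filling-volume `μ(T)` of a `d`-hypertree `T` on `[n]`. -/
noncomputable def fillVolAvg (n d : ℕ) (T : Finset (Finset ℕ)) : ℝ :=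
  (∑ σ ∈ simplices (rng n) d, ((fill (bd {σ}) T).card : ℝ)) / (n.choose (d + 1) : ℝ)

open Classical in
/-- The cut of `τ` in `T`: the set of `d`-simplices `σ` on `[n]` such that
`T ⊕ {τ} ⊕ {σ}` is a `d`-hypertree on `[n]`. -/
noncomputable def cut (n d : ℕ) (τ : Finset ℕ) (T : Finset (Finset ℕ)) : Finset (Finset ℕ) :=
  (simplices (rng n) d).filter fun σ => IsHypertreeOn (rng n) d ((T ∆ {τ}) ∆ {σ})


lemma mem_bd {X : Finset (Finset ℕ)} {τ : Finset ℕ} :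
    τ ∈ bd X ↔ Odd (X.filter fun σ => τ ⊆ σ ∧ τ.card + 1 = σ.card).card := by
  unfold bd
  rw [mem_filter, and_iff_right_iff_imp]
  intro h
  obtain ⟨σ, hσ⟩ := Finset.card_pos.mp h.pos
  rw [mem_filter] at hσ
  exact mem_biUnion.2 ⟨σ, hσ.1, mem_powerset.2 hσ.2.1⟩

lemma mem_simp {V σ : Finset ℕ} {d : ℕ} :
    σ ∈ simplices V d ↔ σ ⊆ V ∧ σ.card = d + 1 := by
  simp [simplices]

lemma card_simp (V : Finset ℕ) (d : ℕ) : (simplices V d).card = V.card.choose (d + 1) := by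
  rw [← card_powersetCard]
  congr 1
  ext σ
  simp [mem_simp, mem_powersetCard]

lemma card_sd {α : Type*} [DecidableEq α] (A B : Finset α) :
    (A ∆ B).card % 2 = (A.card + B.card) % 2 := by
  have h1 : (A ∆ B).card = (A \ B).card + (B \ A).card := by
    rw [symmDiff_def, sup_eq_union, card_union_of_disjoint disjoint_sdiff_sdiff]
  have h2 := card_sdiff_add_card_inter A B
  have h3 := card_sdiff_add_card_inter B A
  rw [inter_comm] at h3
  omega

lemma filter_sd {α : Type*} [DecidableEq α] (p : α → Prop) [DecidablePred p] (A B : Finset α) :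
    (A ∆ B).filter p = A.filter p ∆ B.filter p := by
  ext x
  simp only [mem_filter, mem_symmDiff]
  tauto

lemma bd_sd (A B : Finset (Finset ℕ)) : bd (A ∆ B) = bd A ∆ bd B := by
  ext τ
  rw [mem_symmDiff, mem_bd, mem_bd, mem_bd, filter_sd]
  have := card_sd (A.filter fun σ => τ ⊆ σ ∧ τ.card + 1 = σ.card)
    (B.filter fun σ => τ ⊆ σ ∧ τ.card + 1 = σ.card)
  simp only [Nat.odd_iff]
  omega

lemma bd_empty : bd ∅ = ∅ := by
  simp [bd]

/-- no member contains `v` -/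
def VFree (v : ℕ) (X : Finset (Finset ℕ)) : Prop := ∀ σ ∈ X, v ∉ σ

lemma VFree.sd {v : ℕ} {A B : Finset (Finset ℕ)} (hA : VFree v A) (hB : VFree v B) :
    VFree v (A ∆ B) := by
  intro σ h
  rcases mem_symmDiff.1 h with h | h
  · exact hA σ h.1
  · exact hB σ h.1

lemma VFree.bd {v : ℕ} {A : Finset (Finset ℕ)} (hA : VFree v A) : VFree v (bd A) := by
  intro τ h hv
  obtain ⟨σ, hσ⟩ := Finset.card_pos.mp (mem_bd.1 h).pos
  rw [mem_filter] at hσ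
  exact hA σ hσ.1 (hσ.2.1 hv)

lemma mem_cone {v : ℕ} {X : Finset (Finset ℕ)} (hX : VFree v X) {τ : Finset ℕ} :
    τ ∈ cone v X ↔ v ∈ τ ∧ τ.erase v ∈ X := by
  unfold cone
  rw [mem_image]
  constructor
  · rintro ⟨σ, h, rfl⟩
    refine ⟨mem_insert_self _ _, ?_⟩
    rw [erase_insert (hX σ h)]
    exact h
  · rintro ⟨h, h'⟩
    exact ⟨_, h', insert_erase h⟩

lemma mem_link {v : ℕ} {X : Finset (Finset ℕ)} {τ : Finset ℕ} :
    τ ∈ link v X ↔ v ∉ τ ∧ insert v τ ∈ X := by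
  unfold link
  rw [mem_image]
  constructor
  · rintro ⟨σ, h, rfl⟩
    rw [mem_filter] at h
    refine ⟨notMem_erase _ _, ?_⟩
    rw [insert_erase h.2]
    exact h.1
  · rintro ⟨h, h'⟩
    exact ⟨_, mem_filter.2 ⟨h', mem_insert_self _ _⟩, erase_insert h⟩

lemma link_vfree (v : ℕ) (X : Finset (Finset ℕ)) : VFree v (link v X) :=
  fun _ h => (mem_link.1 h).1

lemma filter_vfree (v : ℕ) (X : Finset (Finset ℕ)) : VFree v (X.filter fun σ => v ∉ σ) :=
  fun _ h => (mem_filter.1 h).2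

lemma card_cone {v : ℕ} {X : Finset (Finset ℕ)} (hX : VFree v X) :
    (cone v X).card = X.card := by
  unfold cone
  apply card_image_of_injOn
  intro a ha b hb h
  have := congrArg (fun s => s.erase v) h
  simpa [erase_insert (hX a ha), erase_insert (hX b hb)] using this

lemma decomp (v : ℕ) (X : Finset (Finset ℕ)) :
    X = (X.filter fun σ => v ∉ σ) ∆ cone v (link v X) := by
  ext τ
  rw [mem_symmDiff, mem_cone (link_vfree v X), mem_link, mem_filter]
  by_cases h : v ∈ τ
  · simp [h, insert_erase h]
  · simp [h]

lemma cone_empty (v : ℕ) : cone v ∅ = ∅ := by simp [cone]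

lemma filter_cone {v : ℕ} {A B : Finset (Finset ℕ)} (hA : VFree v A) (hB : VFree v B) :
    (A ∆ cone v B).filter (fun σ => v ∉ σ) = A := by
  ext τ
  rw [mem_filter, mem_symmDiff, mem_cone hB]
  have := hA τ
  tauto

lemma split_eq_empty {v : ℕ} {A B : Finset (Finset ℕ)} (hA : VFree v A) (hB : VFree v B)
    (h : A ∆ cone v B = ∅) : A = ∅ ∧ B = ∅ := by
  have h1 := filter_cone hA hB
  rw [h, filter_empty] at h1
  refine ⟨h1.symm, ?_⟩
  rw [← h1, ← bot_eq_empty, bot_symmDiff, bot_eq_empty] at h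
  rw [← card_eq_zero, ← card_cone hB, h, card_empty]

lemma bd_cone {v : ℕ} {X : Finset (Finset ℕ)} (hX : VFree v X) :
    bd (cone v X) = X ∆ cone v (bd X) := by
  ext τ
  rw [mem_bd, mem_symmDiff, mem_cone hX.bd]
  by_cases h : v ∈ τ
  · have hτ : τ ∉ X := fun h' => hX τ h' h
    simp only [h, hτ, not_false_eq_true, true_and, and_true, false_and, false_or]
    rw [mem_bd]
    have : (cone v X).filter (fun σ => τ ⊆ σ ∧ τ.card + 1 = σ.card) =
        cone v (X.filter fun σ => τ.erase v ⊆ σ ∧ (τ.erase v).card + 1 = σ.card) := by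
      ext σ
      rw [mem_filter, mem_cone hX, mem_cone (fun σ h => hX σ (mem_filter.1 h).1), mem_filter,
        and_assoc]
      refine and_congr_right fun hv => and_congr_right fun _ => ?_
      have e1 := card_erase_add_one h
      have e2 := card_erase_add_one hv
      apply and_congr
      · constructor
        · exact fun h' => erase_subset_erase v h'
        · intro h' x hx
          by_cases hxv : x = v
          · exact hxv ▸ hv
          · exact mem_of_mem_erase (h' (mem_erase.2 ⟨hxv, hx⟩))
      · omega
    rw [this, card_cone (fun σ h => hX σ (mem_filter.1 h).1)]
  · simp only [h, false_and, not_false_eq_true, and_true, or_false]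
    have : (cone v X).filter (fun σ => τ ⊆ σ ∧ τ.card + 1 = σ.card) =
        cone v (X.filter fun σ => σ = τ) := by
      ext σ
      rw [mem_filter, mem_cone hX, mem_cone (fun σ h => hX σ (mem_filter.1 h).1), mem_filter,
        and_assoc]
      refine and_congr_right fun hv => and_congr_right fun _ => ?_
      have e2 := card_erase_add_one hv
      constructor
      · rintro ⟨h1, h2⟩
        symm
        apply eq_of_subset_of_card_le
        · intro x hx
          exact mem_erase.2 ⟨fun e => h (e ▸ hx), h1 hx⟩
        · omega
      · intro e
        rw [← e]
        exact ⟨erase_subset _ _, e2⟩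
    rw [this, card_cone (fun σ h => hX σ (mem_filter.1 h).1), filter_eq']
    split_ifs with hh <;> simp [hh]

lemma insert_eq_sd {σ : Finset ℕ} {X : Finset (Finset ℕ)} (h : σ ∉ X) :
    insert σ X = X ∆ {σ} := by
  ext τ
  rw [mem_insert, mem_symmDiff, mem_singleton]
  constructor
  · rintro (rfl | h')
    · exact Or.inr ⟨rfl, h⟩
    · exact Or.inl ⟨h', fun e => h (e ▸ h')⟩
  · tauto

lemma sd_empty (A : Finset (Finset ℕ)) : A ∆ ∅ = A := symmDiff_bot A

lemma bd_bd_single (σ : Finset ℕ) : bd (bd {σ}) = ∅ := by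
  induction σ using Finset.induction_on with
  | empty =>
    have : bd {(∅ : Finset ℕ)} = ∅ := by
      ext τ
      rw [mem_bd, filter_singleton]
      simp
    rw [this, bd_empty]
  | insert v ρ hv ih =>
    have hf : VFree v {ρ} := by
      intro σ h
      rw [mem_singleton.1 h]
      exact hv
    have : ({insert v ρ} : Finset (Finset ℕ)) = cone v {ρ} := by simp [cone]
    rw [this, bd_cone hf, bd_sd, bd_cone hf.bd, ih, cone_empty, sd_empty, symmDiff_self]
    rfl

lemma bd_bd (X : Finset (Finset ℕ)) : bd (bd X) = ∅ := by
  induction X using Finset.induction_on with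
  | empty => simp [bd_empty]
  | insert σ X h ih =>
    rw [insert_eq_sd h, bd_sd, bd_sd, ih, bd_bd_single, sd_empty]

lemma acyclic_cone {v : ℕ} {F G : Finset (Finset ℕ)} (hF : VFree v F) (hG : VFree v G)
    (aF : IsAcyclic F) (aG : IsAcyclic G) : IsAcyclic (F ∆ cone v G) := by
  intro Y hY hne hbd
  have hd := decomp v Y
  have h1 : (Y.filter fun σ => v ∉ σ) ⊆ F := by
    rw [← filter_cone hF hG]
    exact filter_subset_filter _ hY
  have h2 : link v Y ⊆ G := by
    intro τ hτ
    rw [mem_link] at hτ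
    have := hY hτ.2
    rw [mem_symmDiff, mem_cone hG, erase_insert hτ.1] at this
    rcases this with h | h
    · exact absurd (mem_insert_self _ _) (hF _ h.1)
    · exact h.1.2
  have hb := hbd
  rw [hd, bd_sd, bd_cone (link_vfree v Y), ← symmDiff_assoc] at hb
  obtain ⟨e1, e2⟩ := split_eq_empty ((filter_vfree v Y).bd.sd (link_vfree v Y))
    (link_vfree v Y).bd hb
  have e3 : link v Y = ∅ := by
    by_contra h
    exact aG _ h2 h e2
  rw [e3, sd_empty] at e1
  have e4 : (Y.filter fun σ => v ∉ σ) = ∅ := by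
    by_contra h
    exact aF _ h1 h e1
  rw [e3, e4, cone_empty, sd_empty] at hd
  exact hne hd

lemma acyclic_empty : IsAcyclic ∅ := by
  intro Y hY hne
  exact absurd (subset_empty.1 hY) hne

lemma simp_vfree {V : Finset ℕ} {v d : ℕ} {X : Finset (Finset ℕ)}
    (hX : X ⊆ simplices (V.erase v) d) : VFree v X := by
  intro σ h hv
  exact notMem_erase v V ((mem_simp.1 (hX h)).1 hv)

lemma sd_subset {A B S : Finset (Finset ℕ)} (hA : A ⊆ S) (hB : B ⊆ S) : A ∆ B ⊆ S := by
  intro σ h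
  rcases mem_symmDiff.1 h with h | h
  · exact hA h.1
  · exact hB h.1

lemma cone_subset {V : Finset ℕ} {v d : ℕ} (hv : v ∈ V) {X : Finset (Finset ℕ)}
    (hX : X ⊆ simplices (V.erase v) d) : cone v X ⊆ simplices V (d + 1) := by
  intro σ h
  rw [mem_cone (simp_vfree hX)] at h
  have := mem_simp.1 (hX h.2)
  rw [mem_simp]
  have e := card_erase_add_one h.1
  refine ⟨?_, by omega⟩
  rw [← insert_erase h.1]
  exact insert_subset hv (this.1.trans (erase_subset _ _))

lemma simp_mono {V : Finset ℕ} {v d : ℕ} : simplices (V.erase v) d ⊆ simplices V d := by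
  intro σ h
  rw [mem_simp] at *
  exact ⟨h.1.trans (erase_subset _ _), h.2⟩

lemma filter_simp {V : Finset ℕ} {v d : ℕ} {X : Finset (Finset ℕ)} (hX : X ⊆ simplices V d) :
    (X.filter fun σ => v ∉ σ) ⊆ simplices (V.erase v) d := by
  intro σ h
  rw [mem_filter] at h
  have := mem_simp.1 (hX h.1)
  exact mem_simp.2 ⟨subset_erase.2 ⟨this.1, h.2⟩, this.2⟩

lemma link_simp {V : Finset ℕ} {v d : ℕ} {X : Finset (Finset ℕ)} (hX : X ⊆ simplices V (d + 1)) :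
    link v X ⊆ simplices (V.erase v) d := by
  intro σ h
  rw [mem_link] at h
  have := mem_simp.1 (hX h.2)
  rw [card_insert_of_notMem h.1] at this
  exact mem_simp.2 ⟨subset_erase.2 ⟨(subset_insert _ _).trans this.1, h.1⟩, by omega⟩

lemma bd_simp {V : Finset ℕ} {d : ℕ} {X : Finset (Finset ℕ)} (hX : X ⊆ simplices V (d + 1)) :
    bd X ⊆ simplices V d := by
  intro τ h
  obtain ⟨σ, hσ⟩ := Finset.card_pos.mp (mem_bd.1 h).pos
  rw [mem_filter] at hσ
  have := mem_simp.1 (hX hσ.1)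
  exact mem_simp.2 ⟨hσ.2.1.trans this.1, by omega⟩

lemma card_disj_cone {v : ℕ} {A B : Finset (Finset ℕ)} (hA : VFree v A) (hB : VFree v B) :
    (A ∆ cone v B).card = A.card + B.card := by
  have : Disjoint A (cone v B) := by
    rw [Finset.disjoint_left]
    intro σ h h'
    exact hA σ h ((mem_cone hB).1 h').1
  rw [this.symmDiff_eq_sup, sup_eq_union, card_union_of_disjoint this, card_cone hB]

lemma two_rank_le {V : Finset ℕ} {v : ℕ} (hv : v ∈ V) {F : Finset (Finset ℕ)}
    (hF : F ⊆ simplices V 2) (aF : IsAcyclic F) : F.card ≤ (V.card - 1).choose 2 := by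
  have key : F.powerset.card ≤ (simplices (V.erase v) 1).powerset.card := by
    apply card_le_card_of_injOn (fun Y => (bd Y).filter fun σ => v ∉ σ)
    · intro Y hY
      have hY := mem_powerset.1 hY
      exact mem_powerset.2 (filter_simp (bd_simp (hY.trans hF)))
    · intro Y₁ h₁ Y₂ h₂ h
      have h₁ := mem_powerset.1 h₁
      have h₂ := mem_powerset.1 h₂
      have h0 : (bd (Y₁ ∆ Y₂)).filter (fun σ => v ∉ σ) = ∅ := by
        rw [bd_sd, filter_sd]
        simp only at h
        rw [h, symmDiff_self]
        rfl
      have hd := decomp v (bd (Y₁ ∆ Y₂))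
      rw [h0] at hd
      have hb := bd_bd (Y₁ ∆ Y₂)
      rw [hd, ← bot_eq_empty, bot_symmDiff, bot_eq_empty, bd_cone (link_vfree _ _)] at hb
      have := (split_eq_empty (link_vfree _ _) (link_vfree _ _).bd hb).1
      rw [this, cone_empty, sd_empty] at hd
      have h3 : Y₁ ∆ Y₂ = ∅ := by
        by_contra hne
        exact aF _ (sd_subset h₁ h₂) hne hd
      exact symmDiff_eq_bot.1 h3
  rw [card_powerset, card_powerset, card_simp, card_erase_of_mem hv] at key
  exact (Nat.pow_le_pow_iff_right (by norm_num)).1 key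

lemma hyper_span {V : Finset ℕ} {d : ℕ} {T : Finset (Finset ℕ)} (hT : IsHypertreeOn V d T)
    (X : Finset (Finset ℕ)) (hX : X ⊆ simplices V d) : ∃ Y ⊆ T, bd Y = bd X := by
  induction X using Finset.induction_on with
  | empty => exact ⟨∅, empty_subset _, rfl⟩
  | insert σ X h ih =>
    obtain ⟨Y, hY, e⟩ := ih ((subset_insert _ _).trans hX)
    have hs : ∃ Y' ⊆ T, bd Y' = bd {σ} := by
      by_cases hσ : σ ∈ T
      · exact ⟨{σ}, singleton_subset_iff.2 hσ, rfl⟩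
      · have hna : ¬ IsAcyclic (insert σ T) := by
          intro ha
          have := hT.2.2 _ (subset_insert _ _)
            (insert_subset (hX (mem_insert_self _ _)) hT.1) ha
          exact hσ (this ▸ mem_insert_self _ _)
        unfold IsAcyclic at hna
        push Not at hna
        obtain ⟨W, hW, hne, hb⟩ := hna
        have hσW : σ ∈ W := by
          by_contra hn
          exact hT.2.1 W ((subset_insert_iff_of_notMem hn).1 hW) (nonempty_iff_ne_empty.1 hne) hb
        refine ⟨W.erase σ, subset_insert_iff.1 hW, ?_⟩
        rw [← insert_erase hσW, insert_eq_sd (notMem_erase _ _), bd_sd] at hb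
        exact symmDiff_eq_bot.1 hb
    obtain ⟨Y', hY', e'⟩ := hs
    exact ⟨Y ∆ Y', sd_subset hY hY', by rw [insert_eq_sd h, bd_sd, bd_sd, e, e']⟩

lemma rank_ge {V : Finset ℕ} {v : ℕ} (hv : v ∈ V) {T : Finset (Finset ℕ)}
    (hT : IsHypertreeOn V 2 T) : (V.card - 1).choose 2 ≤ T.card := by
  have key : (simplices (V.erase v) 1).powerset ⊆
      T.powerset.image (fun Y => (bd Y).filter fun σ => v ∉ σ) := by
    intro A hA
    rw [mem_powerset] at hA
    obtain ⟨Y, hY, e⟩ := hyper_span hT _ (cone_subset hv hA)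
    refine mem_image.2 ⟨Y, mem_powerset.2 hY, ?_⟩
    have hf := simp_vfree hA
    rw [e, bd_cone hf, filter_cone hf hf.bd]
  have := (card_le_card key).trans card_image_le
  rw [card_powerset, card_powerset, card_simp, card_erase_of_mem hv] at this
  exact (Nat.pow_le_pow_iff_right (by norm_num)).1 this

lemma card_bd_parity {V : Finset ℕ} (T : Finset (Finset ℕ)) (hT : T ⊆ simplices V 2) :
    (bd T).card % 2 = T.card % 2 := by
  induction T using Finset.induction_on with
  | empty => simp [bd_empty]
  | insert σ X h ih =>
    have ih := ih ((subset_insert _ _).trans hT)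
    have hσ := (mem_simp.1 (hT (mem_insert_self _ _))).2
    have : bd {σ} = powersetCard 2 σ := by
      ext τ
      rw [mem_bd, filter_singleton, mem_powersetCard]
      split_ifs with hh
      · simp only [card_singleton, odd_one, true_iff]
        exact ⟨hh.1, by omega⟩
      · simp only [card_empty, Nat.not_odd_zero, false_iff]
        intro h'
        exact hh ⟨h'.1, by omega⟩
    rw [card_insert_of_notMem h, insert_eq_sd h, bd_sd, card_sd, this, card_powersetCard, hσ]
    have : Nat.choose (2 + 1) 2 = 3 := by decide
    omega

lemma even_pts {V : Finset ℕ} {L : Finset (Finset ℕ)} (hL : L ⊆ simplices V 0)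
    (hb : bd L = ∅) : L.card % 2 = 0 := by
  have h : ∅ ∉ bd L := by simp [hb]
  rw [mem_bd, filter_true_of_mem, Nat.not_odd_iff] at h
  · exact h
  · intro σ hσ
    have := (mem_simp.1 (hL hσ)).2
    simp [this]

lemma bd_pt (x : ℕ) : bd {{x}} = {∅} := by
  have : ({{x}} : Finset (Finset ℕ)) = cone x {∅} := by simp [cone]
  have hf : VFree x {∅} := by simp [VFree]
  have h0 : bd {(∅ : Finset ℕ)} = ∅ := by
    ext τ
    rw [mem_bd, filter_singleton]
    simp
  rw [this, bd_cone hf, h0, cone_empty, sd_empty]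

lemma acyclic_pt (x : ℕ) : IsAcyclic {{x}} := by
  intro Y hY hne
  rcases subset_singleton_iff.1 hY with h | h
  · exact absurd h hne
  · rw [h, bd_pt]
    simp

def GoodTree (W : Finset ℕ) (L G : Finset (Finset ℕ)) : Prop :=
  G ⊆ simplices W 1 ∧ IsAcyclic G ∧ G.card = W.card - 1 ∧ bd G = L

lemma tree_ext {W : Finset ℕ} {L G : Finset (Finset ℕ)} {w x : ℕ} (hw : w ∈ W)
    (hL : L ⊆ simplices W 0) (hwL : {w} ∈ L) (hx : x ∈ W.erase w)
    (hG : GoodTree (W.erase w) (L.erase {w} ∆ {{x}}) G) :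
    GoodTree W L (G ∆ cone w {{x}}) := by
  obtain ⟨h1, h2, h3, h4⟩ := hG
  have hxs : ({{x}} : Finset (Finset ℕ)) ⊆ simplices (W.erase w) 0 := by
    rw [singleton_subset_iff, mem_simp, singleton_subset_iff]
    exact ⟨hx, by simp⟩
  have hxf := simp_vfree hxs
  have hGf := simp_vfree h1
  refine ⟨sd_subset (h1.trans simp_mono) (cone_subset hw hxs),
    acyclic_cone hGf hxf h2 (acyclic_pt x), ?_, ?_⟩
  · rw [card_disj_cone hGf hxf, h3, card_erase_of_mem hw, card_singleton]
    have : 0 < (W.erase w).card := card_pos.2 ⟨x, hx⟩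
    rw [card_erase_of_mem hw] at this
    omega
  · rw [bd_sd, h4, bd_cone hxf, bd_pt, ← symmDiff_assoc, symmDiff_symmDiff_cancel_right]
    have : cone w {∅} = {{w}} := by simp [cone]
    rw [this, ← insert_eq_sd (notMem_erase _ _), insert_erase hwL]

lemma tree_pre {W : Finset ℕ} {L : Finset (Finset ℕ)} {w x : ℕ}
    (hL : L ⊆ simplices W 0) (hwL : {w} ∈ L) (hx : x ∈ W.erase w) (hb : bd L = ∅) :
    L.erase {w} ∆ {{x}} ⊆ simplices (W.erase w) 0 ∧ bd (L.erase {w} ∆ {{x}}) = ∅ := by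
  constructor
  · apply sd_subset
    · intro σ h
      rw [mem_erase] at h
      have := mem_simp.1 (hL h.2)
      obtain ⟨y, rfl⟩ := card_eq_one.1 this.2
      rw [mem_simp]
      refine ⟨?_, this.2⟩
      rw [singleton_subset_iff, mem_erase]
      refine ⟨?_, singleton_subset_iff.1 this.1⟩
      rintro rfl
      exact h.1 rfl
    · rw [singleton_subset_iff, mem_simp, singleton_subset_iff]
      exact ⟨hx, by simp⟩
  · rw [← insert_erase hwL, insert_eq_sd (notMem_erase _ _), bd_sd, bd_pt] at hb
    rw [bd_sd, bd_pt, hb]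

lemma tree_pick {W : Finset ℕ} {L : Finset (Finset ℕ)} (hL : L ⊆ simplices W 0)
    (hne : L ≠ ∅) : ∃ w ∈ W, {w} ∈ L := by
  obtain ⟨σ, hσ⟩ := nonempty_iff_ne_empty.2 hne
  have := mem_simp.1 (hL hσ)
  obtain ⟨y, rfl⟩ := card_eq_one.1 this.2
  exact ⟨y, singleton_subset_iff.1 this.1, hσ⟩

lemma tree_exists (m : ℕ) : ∀ (W : Finset ℕ) (L : Finset (Finset ℕ)), W.card = m + 1 →
    L ⊆ simplices W 0 → bd L = ∅ → (m = 0 ∨ L ≠ ∅) → ∃ G, GoodTree W L G := by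
  induction m with
  | zero =>
    intro W L hW hL hb _
    have h1 := even_pts hL hb
    have h2 := card_le_card hL
    rw [card_simp, hW] at h2
    simp only [zero_add, Nat.choose_self] at h2
    have : L = ∅ := by
      rw [← card_eq_zero]
      omega
    exact ⟨∅, empty_subset _, acyclic_empty, by simp [hW], by rw [bd_empty, this]⟩
  | succ m ih =>
    intro W L hW hL hb hne
    have hne : L ≠ ∅ := by
      rcases hne with h | h
      · omega
      · exact h
    obtain ⟨w, hw, hwL⟩ := tree_pick hL hne
    have hc : (W.erase w).card = m + 1 := by
      rw [card_erase_of_mem hw]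
      omega
    have hx : ∃ x ∈ W.erase w, m = 0 ∨ L.erase {w} ∆ {{x}} ≠ ∅ := by
      rcases Nat.eq_zero_or_pos m with h | h
      · obtain ⟨x, hx⟩ := card_pos.1 (by omega : 0 < (W.erase w).card)
        exact ⟨x, hx, Or.inl h⟩
      · obtain ⟨x, hx, y, hy, hxy⟩ := one_lt_card.1 (by omega : 1 < (W.erase w).card)
        by_cases h1 : L.erase {w} ∆ {{x}} = ∅
        · refine ⟨y, hy, Or.inr fun h2 => hxy ?_⟩
          have e1 := symmDiff_eq_bot.1 h1
          have e2 := symmDiff_eq_bot.1 h2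
          rw [e1] at e2
          simpa using e2
        · exact ⟨x, hx, Or.inr h1⟩
    obtain ⟨x, hx, hx'⟩ := hx
    have hp := tree_pre hL hwL hx hb
    obtain ⟨G, hG⟩ := ih _ _ hc hp.1 hp.2 hx'
    exact ⟨_, tree_ext hw hL hwL hx hG⟩

lemma tree_ne {W : Finset ℕ} {L : Finset (Finset ℕ)} (hW : 4 ≤ W.card)
    (hL : L ⊆ simplices W 0) (hb : bd L = ∅) (hne : L ≠ ∅) (H : Finset (Finset ℕ)) :
    ∃ G, GoodTree W L G ∧ G ≠ H := by
  obtain ⟨w, hw, hwL⟩ := tree_pick hL hne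
  have hc : (W.erase w).card = (W.card - 2) + 1 := by
    rw [card_erase_of_mem hw]
    omega
  have hx : ∃ x ∈ W.erase w, ∃ y ∈ W.erase w, x ≠ y ∧ L.erase {w} ∆ {{x}} ≠ ∅ ∧
      L.erase {w} ∆ {{y}} ≠ ∅ := by
    obtain ⟨a, b, c, ha, hb, hc, hab, hac, hbc⟩ :=
      two_lt_card_iff.1 (by omega : 2 < (W.erase w).card)
    have key : ∀ p q : ℕ, p ≠ q → L.erase {w} ∆ {{p}} = ∅ → L.erase {w} ∆ {{q}} ≠ ∅ := by
      intro p q hpq h1 h2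
      have e1 := symmDiff_eq_bot.1 h1
      have e2 := symmDiff_eq_bot.1 h2
      rw [e1] at e2
      exact hpq (by simpa using e2)
    by_cases h1 : L.erase {w} ∆ {{a}} = ∅
    · exact ⟨b, hb, c, hc, hbc, key _ _ hab h1, key _ _ hac h1⟩
    · by_cases h2 : L.erase {w} ∆ {{b}} = ∅
      · exact ⟨a, ha, c, hc, hac, h1, key _ _ hbc h2⟩
      · exact ⟨a, ha, b, hb, hab, h1, h2⟩
  obtain ⟨x, hx, y, hy, hxy, nx, ny⟩ := hx
  have hpx := tree_pre hL hwL hx hb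
  have hpy := tree_pre hL hwL hy hb
  obtain ⟨G, hG⟩ := tree_exists _ _ _ hc hpx.1 hpx.2 (Or.inr nx)
  obtain ⟨K, hK⟩ := tree_exists _ _ _ hc hpy.1 hpy.2 (Or.inr ny)
  have tG := tree_ext hw hL hwL hx hG
  have tK := tree_ext hw hL hwL hy hK
  by_cases h : G ∆ cone w {{x}} = H
  · refine ⟨_, tK, fun h' => ?_⟩
    have e : insert w {x} ∈ G ∆ cone w {{x}} := by
      rw [mem_symmDiff]
      refine Or.inr ⟨by simp [cone], fun hh => simp_vfree hG.1 _ hh (mem_insert_self _ _)⟩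
    rw [h, ← h', mem_symmDiff] at e
    rcases e with e | e
    · exact simp_vfree hK.1 _ e.1 (mem_insert_self _ _)
    · have e := e.1
      have hyf : VFree w {{y}} := by
        intro σ hσ hwσ
        rw [mem_singleton.1 hσ, mem_singleton] at hwσ
        exact (mem_erase.1 hy).1 hwσ.symm
      rw [mem_cone hyf, erase_insert, mem_singleton] at e
      · exact hxy (by simpa using e.2)
      · rw [mem_singleton]
        exact (mem_erase.1 hx).1.symm
  · exact ⟨_, tG, h⟩

lemma main_exists (m : ℕ) : ∀ (V : Finset ℕ) (Z : Finset (Finset ℕ)), V.card = m + 2 →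
    Z ⊆ simplices V 1 → bd Z = ∅ → (m = 0 ∨ Z ≠ ∅) →
    Z.card % 2 = (m + 1).choose 2 % 2 →
    ∃ T ⊆ simplices V 2, IsAcyclic T ∧ T.card = (m + 1).choose 2 ∧ bd T = Z := by
  induction m with
  | zero =>
    intro V Z hV hZ hb _ hp
    have h2 := card_le_card hZ
    rw [card_simp, hV] at h2
    have h3 : Nat.choose (0 + 2) (1 + 1) = 1 := by decide
    have h4 : Nat.choose (0 + 1) 2 = 0 := by decide
    have : Z = ∅ := by
      rw [← card_eq_zero]
      omega
    exact ⟨∅, empty_subset _, acyclic_empty, by simp, by rw [bd_empty, this]⟩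
  | succ m ih =>
    intro V Z hV hZ hb hne hp
    have hne : Z ≠ ∅ := by
      rcases hne with h | h
      · omega
      · exact h
    obtain ⟨σ, hσ⟩ := nonempty_iff_ne_empty.2 hne
    have hσ' := mem_simp.1 (hZ hσ)
    obtain ⟨v, hvσ⟩ := card_pos.1 (by omega : 0 < σ.card)
    have hv : v ∈ V := hσ'.1 hvσ
    have hc : (V.erase v).card = m + 2 := by
      rw [card_erase_of_mem hv]
      omega
    have hd := decomp v Z
    have hLs := link_simp (v := v) hZ
    have hZs := filter_simp (v := v) hZ
    have hLf := link_vfree v Z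
    have hZf := filter_vfree v Z
    have hLne : link v Z ≠ ∅ := by
      apply ne_empty_of_mem (a := σ.erase v)
      rw [mem_link, insert_erase hvσ]
      exact ⟨notMem_erase _ _, hσ⟩
    generalize link v Z = L at *
    generalize (Z.filter fun σ => v ∉ σ) = Z' at *
    have hbL : bd L = ∅ ∧ bd Z' = L := by
      rw [hd, bd_sd, bd_cone hLf, ← symmDiff_assoc] at hb
      have := split_eq_empty (hZf.bd.sd hLf) hLf.bd hb
      exact ⟨this.2, symmDiff_eq_bot.1 this.1⟩
    have hLe := even_pts hLs hbL.1
    have hcard : Z.card = Z'.card + L.card := by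
      rw [hd, card_disj_cone hZf hLf]
    have hch : (m + 1 + 1).choose 2 = (m + 1) + (m + 1).choose 2 := by
      rw [Nat.choose_succ_succ' (m + 1) 1, Nat.choose_one_right]
    have hG : ∃ G, GoodTree (V.erase v) L G ∧ (m = 0 ∨ Z' ∆ G ≠ ∅) := by
      by_cases h4 : 4 ≤ (V.erase v).card
      · obtain ⟨G, hG, hGn⟩ := tree_ne h4 hLs hbL.1 hLne Z'
        exact ⟨G, hG, Or.inr fun h => hGn (symmDiff_eq_bot.1 h).symm⟩
      · obtain ⟨G, hG⟩ := tree_exists (m + 1) _ _ hc hLs hbL.1 (Or.inr hLne)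
        refine ⟨G, hG, ?_⟩
        rcases Nat.eq_zero_or_pos m with h | h
        · exact Or.inl h
        · refine Or.inr fun he => ?_
          have he := symmDiff_eq_bot.1 he
          have hm : m = 1 := by omega
          subst hm
          have h1 := hG.2.2.1
          rw [← he] at h1
          have h3 : Nat.choose (1 + 1) 2 = 1 := by decide
          omega
    obtain ⟨G, ⟨g1, g2, g3, g4⟩, hGn⟩ := hG
    have hGf := simp_vfree g1
    obtain ⟨T, t1, t2, t3, t4⟩ := ih (V.erase v) (Z' ∆ G) hc (sd_subset hZs g1)
      (by rw [bd_sd, hbL.2, g4, symmDiff_self]; rfl) hGn (by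
        rw [card_sd]
        omega)
    have hTf := simp_vfree t1
    refine ⟨T ∆ cone v G, sd_subset (t1.trans simp_mono) (cone_subset hv g1),
      acyclic_cone hTf hGf t2 g2, ?_, ?_⟩
    · rw [card_disj_cone hTf hGf]
      omega
    · rw [bd_sd, t4, bd_cone hGf, g4, ← symmDiff_assoc, symmDiff_symmDiff_cancel_right]
      exact hd.symm

/-- A nontrivial 1-cycle `Z` on `[n]` (`n ≥ 3`) over `F_2` is the boundary of a
2-hypertree on `[n]` iff `|Z| ≡ C(n-1,2) (mod 2)`. -/
theorem boundary_of_two_hypertree_iff (n : ℕ) (hn : 3 ≤ n) (Z : Finset (Finset ℕ))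
    (hZ : Z ⊆ simplices (rng n) 1) (hZcyc : bd Z = ∅) (hZne : Z ≠ ∅) :
    (∃ T, IsHypertreeOn (rng n) 2 T ∧ bd T = Z) ↔
      Z.card % 2 = (n - 1).choose 2 % 2 := by
  have hv : 1 ∈ rng n := by
    rw [rng, Finset.mem_Icc]
    omega
  have hcard : (rng n).card = n := by simp [rng]
  constructor
  · rintro ⟨T, hT, rfl⟩
    have h1 := two_rank_le hv hT.1 hT.2.1
    have h2 := rank_ge hv hT
    rw [hcard] at h1 h2
    rw [card_bd_parity T hT.1, le_antisymm h1 h2]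
  · intro hp
    have e : n - 2 + 1 = n - 1 := by omega
    obtain ⟨T, t1, t2, t3, t4⟩ := main_exists (n - 2) (rng n) Z (by omega) hZ hZcyc
      (Or.inr hZne) (by rw [e]; exact hp)
    refine ⟨T, ⟨t1, t2, ?_⟩, t4⟩
    intro G hTG hG aG
    have h1 := two_rank_le hv hG aG
    rw [hcard, ← e, ← t3] at h1
    exact (eq_of_subset_of_card_le hTG h1).symm
end

section
/- Let n ≥ 4. There exists a simple 2-cycle on [n] over F_2 of size C(n-1,2) + 1 (a Hamiltonian 2-cycle) if and only if n ≡ 0 or 3 (mod 4). -/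
open Finset symmDiff

/-- The mod-2 degree of a face. -/
def dg (X : Finset (Finset ℕ)) (τ : Finset ℕ) : ZMod 2 :=
  ∑ σ ∈ X, if τ ⊆ σ ∧ τ.card + 1 = σ.card then (1 : ZMod 2) else 0

theorem mem_bd_iff (X : Finset (Finset ℕ)) (τ : Finset ℕ) : τ ∈ bd X ↔ dg X τ ≠ 0 := by
  unfold bd dg
  rw [Finset.sum_boole, Ne, ZMod.natCast_eq_zero_iff_even, Nat.not_even_iff_odd, Finset.mem_filter]
  constructor
  · exact fun h => h.2
  · intro h
    refine ⟨?_, h⟩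
    have hpos := h.pos
    rw [Finset.card_pos] at hpos
    obtain ⟨σ, hσ⟩ := hpos
    rw [Finset.mem_filter] at hσ
    rw [Finset.mem_biUnion]
    exact ⟨σ, hσ.1, Finset.mem_powerset.2 hσ.2.1⟩

theorem bd_eq_empty_iff (X : Finset (Finset ℕ)) : bd X = ∅ ↔ ∀ τ, dg X τ = 0 := by
  rw [Finset.eq_empty_iff_forall_notMem]
  simp only [mem_bd_iff, not_not, Ne]

theorem dg_insert {X : Finset (Finset ℕ)} {σ : Finset ℕ} (h : σ ∉ X) (τ : Finset ℕ) :
    dg (insert σ X) τ = (if τ ⊆ σ ∧ τ.card + 1 = σ.card then (1 : ZMod 2) else 0) + dg X τ := by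
  unfold dg
  rw [Finset.sum_insert h]

theorem dg_sdiff {X Y : Finset (Finset ℕ)} (h : Y ⊆ X) (τ : Finset ℕ) :
    dg (X \ Y) τ + dg Y τ = dg X τ := by
  unfold dg
  exact Finset.sum_sdiff h

theorem acyclic_insert {X : Finset (Finset ℕ)} {σ τ : Finset ℕ} (hX : IsAcyclic X)
    (h1 : τ ⊆ σ) (h2 : τ.card + 1 = σ.card) (h3 : ∀ σ' ∈ X, ¬ τ ⊆ σ') :
    IsAcyclic (insert σ X) := by
  intro Y hY hne hb
  by_cases hσ : σ ∈ Y
  · rw [bd_eq_empty_iff] at hb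
    have := hb τ
    unfold dg at this
    rw [Finset.sum_eq_single_of_mem σ hσ] at this
    · simp [h1, h2] at this
    · intro σ' hσ' hn
      have : σ' ∈ X := Finset.mem_of_mem_insert_of_ne (hY hσ') hn
      simp [h3 σ' this]
  · refine hX Y ?_ hne hb
    intro s hs
    exact Finset.mem_of_mem_insert_of_ne (hY hs) (fun h => hσ (h ▸ hs))

/-- Indicator of an edge. -/
def ee (a b : ℕ) (τ : Finset ℕ) : ZMod 2 := if τ = {a, b} then 1 else 0

theorem ee_comm (a b : ℕ) (τ : Finset ℕ) : ee a b τ = ee b a τ := by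
  unfold ee
  rw [Finset.pair_comm]

/-- Indicator of the edges of a path. -/
def pe : List ℕ → Finset ℕ → ZMod 2
  | [], _ => 0
  | [_], _ => 0
  | a :: b :: l, τ => ee a b τ + pe (b :: l) τ

theorem pe_append (l₁ : List ℕ) (a : ℕ) (l₂ : List ℕ) (τ : Finset ℕ) :
    pe (l₁ ++ a :: l₂) τ = pe (l₁ ++ [a]) τ + pe (a :: l₂) τ := by
  induction l₁ with
  | nil => simp [pe]
  | cons b l ih =>
    cases l with
    | nil => simp [pe]
    | cons c l => 
      simp only [List.cons_append, pe] at ih ⊢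
      rw [ih]; ring

theorem faces_tri {v a b : ℕ} (h1 : v ≠ a) (h2 : v ≠ b) (h3 : a ≠ b) (τ : Finset ℕ) :
    (if τ ⊆ ({v, a, b} : Finset ℕ) ∧ τ.card + 1 = ({v, a, b} : Finset ℕ).card
      then (1 : ZMod 2) else 0) = ee v a τ + ee a b τ + ee b v τ := by
  have hc : ({v, a, b} : Finset ℕ).card = 3 := Finset.card_eq_three.2 ⟨v, a, b, h1, h2, h3, rfl⟩
  rw [hc]
  have hva : ({v, a} : Finset ℕ) ≠ {a, b} := by
    intro h
    have : v ∈ ({a, b} : Finset ℕ) := h ▸ (by simp)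
    simp at this; tauto
  have hab : ({a, b} : Finset ℕ) ≠ {b, v} := by
    intro h
    have : a ∈ ({b, v} : Finset ℕ) := h ▸ (by simp)
    simp at this; tauto
  have hbv : ({v, a} : Finset ℕ) ≠ {b, v} := by
    intro h
    have : a ∈ ({b, v} : Finset ℕ) := h ▸ (by simp)
    simp at this; tauto
  unfold ee
  by_cases h : τ ⊆ ({v, a, b} : Finset ℕ) ∧ τ.card + 1 = 3
  · rw [if_pos h]
    obtain ⟨hs, hcard⟩ := h
    obtain ⟨p, q, hpq, rfl⟩ := Finset.card_eq_two.1 (by omega : τ.card = 2)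
    have hp : p ∈ ({v, a, b} : Finset ℕ) := hs (by simp)
    have hq : q ∈ ({v, a, b} : Finset ℕ) := hs (by simp)
    simp only [Finset.mem_insert, Finset.mem_singleton] at hp hq
    rcases hp with rfl | rfl | rfl <;> rcases hq with rfl | rfl | rfl <;>
      first
      | exact absurd rfl hpq
      | simp [hva, hab, hbv, hva.symm, hab.symm, hbv.symm]
      | (rw [Finset.pair_comm]; simp [hva, hab, hbv, hva.symm, hab.symm, hbv.symm])
  · rw [if_neg h]
    have k1 : τ ≠ {v, a} := by
      rintro rfl
      exact h ⟨by intro z; simp; tauto, by rw [Finset.card_pair h1]⟩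
    have k2 : τ ≠ {a, b} := by
      rintro rfl
      exact h ⟨by intro z; simp; tauto, by rw [Finset.card_pair h3]⟩
    have k3 : τ ≠ {b, v} := by
      rintro rfl
      exact h ⟨by intro z; simp; tauto, by rw [Finset.card_pair h2.symm]⟩
    simp [k1, k2, k3]

theorem fan_exists (V : Finset ℕ) (T : Finset (Finset ℕ)) (hT : ∀ σ ∈ T, σ ⊆ V ∧ σ.card = 3)
    (hA : IsAcyclic T) (v : ℕ) (hv : v ∉ V) (L : List ℕ) (a : ℕ) (hnd : (a :: L).Nodup)
    (hL : ∀ x ∈ a :: L, x ∈ V) :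
    ∃ X : Finset (Finset ℕ), (∀ σ ∈ X, σ ⊆ insert v V ∧ σ.card = 3) ∧ IsAcyclic X ∧
      X.card = T.card + L.length ∧
      (∀ σ ∈ X, v ∈ σ → σ ⊆ insert v (a :: L).toFinset) ∧
      ∀ τ, dg X τ = dg T τ + pe (v :: a :: L ++ [v]) τ := by
  induction L generalizing a with
  | nil =>
    refine ⟨T, fun σ h => ⟨(hT σ h).1.trans (Finset.subset_insert _ _), (hT σ h).2⟩, hA, by simp,
      fun σ h hvσ => absurd ((hT σ h).1 hvσ) hv, ?_⟩
    intro τ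
    simp only [List.cons_append, List.nil_append, pe]
    rw [ee_comm a v]
    have : ee v a τ + ee v a τ = 0 := CharTwo.add_self_eq_zero _
    rw [add_zero, this, add_zero]
  | cons b L ih =>
    rw [List.nodup_cons] at hnd
    obtain ⟨X, h1, h2, h3, h4, h5⟩ := ih b hnd.2 (fun x hx => hL x (List.mem_cons_of_mem _ hx))
    have haV : a ∈ V := hL a (by simp)
    have hbV : b ∈ V := hL b (by simp)
    have hva : v ≠ a := fun h => hv (h ▸ haV)
    have hvb : v ≠ b := fun h => hv (h ▸ hbV)
    have hab : a ≠ b := fun h => hnd.1 (by simp [h])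
    have hc : ({v, a, b} : Finset ℕ).card = 3 :=
      Finset.card_eq_three.2 ⟨v, a, b, hva, hvb, hab, rfl⟩
    have hfree : ∀ σ' ∈ X, ¬ ({v, a} : Finset ℕ) ⊆ σ' := by
      intro σ' hσ' hs
      have hvs : v ∈ σ' := hs (by simp)
      have has : a ∈ σ' := hs (by simp)
      have := h4 σ' hσ' hvs has
      rw [Finset.mem_insert, List.mem_toFinset] at this
      rcases this with h | h
      · exact hva h.symm
      · exact hnd.1 h
    have hsub : ({v, a} : Finset ℕ) ⊆ {v, a, b} := by intro z; simp; tauto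
    have hnX : ({v, a, b} : Finset ℕ) ∉ X := fun h => hfree _ h hsub
    refine ⟨insert {v, a, b} X, ?_, ?_, ?_, ?_, ?_⟩
    · intro σ hσ
      rw [Finset.mem_insert] at hσ
      rcases hσ with rfl | hσ
      · refine ⟨?_, hc⟩
        intro z hz
        simp only [Finset.mem_insert, Finset.mem_singleton] at hz ⊢
        rcases hz with rfl | rfl | rfl <;> tauto
      · exact h1 σ hσ
    · exact acyclic_insert h2 hsub (by rw [hc, Finset.card_pair hva]) hfree
    · rw [Finset.card_insert_of_notMem hnX, h3, List.length_cons]; ring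
    · intro σ hσ hvσ
      rw [Finset.mem_insert] at hσ
      rcases hσ with rfl | hσ
      · intro z; simp; tauto
      · refine (h4 σ hσ hvσ).trans ?_
        intro z; simp; tauto
    · intro τ
      rw [dg_insert hnX, faces_tri hva hvb hab, h5]
      simp only [List.cons_append, pe]
      rw [ee_comm b v]
      have : ee v b τ + ee v b τ = 0 := CharTwo.add_self_eq_zero _
      linear_combination this

/-- There is a hypertree on `V` with boundary `D`. -/
def Good (V : Finset ℕ) (D : Finset ℕ → ZMod 2) : Prop :=
  ∃ T : Finset (Finset ℕ), (∀ σ ∈ T, σ ⊆ V ∧ σ.card = 3) ∧ IsAcyclic T ∧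
    T.card = (V.card - 1).choose 2 ∧ ∀ τ, dg T τ = D τ

theorem Good.fan {V W : Finset ℕ} {D D' : Finset ℕ → ZMod 2} (h : Good V D) (v a : ℕ) (L : List ℕ)
    (hnd : (v :: a :: L).Nodup) (hV : V = (a :: L).toFinset) (hW : W = (v :: a :: L).toFinset)
    (hD : ∀ τ, D' τ = D τ + pe (v :: a :: L ++ [v]) τ) : Good W D' := by
  obtain ⟨T, h1, h2, h3, h4⟩ := h
  have hnd' := List.nodup_cons.1 hnd
  obtain ⟨X, k1, k2, k3, _, k5⟩ := fan_exists V T h1 h2 v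
    (by rw [hV, List.mem_toFinset]; exact hnd'.1) L a hnd'.2
    (by intro x hx; rw [hV, List.mem_toFinset]; exact hx)
  refine ⟨X, ?_, k2, ?_, ?_⟩
  · intro σ hσ
    refine ⟨?_, (k1 σ hσ).2⟩
    rw [hW, List.toFinset_cons, ← hV]
    exact (k1 σ hσ).1
  · rw [k3, h3, hW, hV, List.toFinset_card_of_nodup hnd, List.toFinset_card_of_nodup hnd'.2]
    simp only [List.length_cons, Nat.add_sub_cancel]
    rw [Nat.choose_succ_succ' L.length 1, Nat.choose_one_right]
    ring
  · intro τ
    rw [k5, h4, hD]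

/-- Indicator of the boundary of a triangle. -/
def tri (a b c : ℕ) (τ : Finset ℕ) : ZMod 2 := ee a b τ + ee b c τ + ee c a τ

set_option maxHeartbeats 4000000 in
theorem good_tri : ∀ (B : List ℕ) (a b c : ℕ), (a :: b :: c :: B).Nodup →
    (B.length % 4 = 0 ∨ B.length % 4 = 1) → Good (a :: b :: c :: B).toFinset (tri a b c)
  | [], a, b, c, hnd, _ => by
    have h0 : Good [b, c].toFinset (fun _ => 0) := by
      refine ⟨∅, by simp, ?_, ?_, by simp [dg]⟩
      · intro Y hY hne
        exact absurd (Finset.subset_empty.1 hY) hne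
      · rw [List.toFinset_card_of_nodup (List.nodup_cons.1 hnd).2]; rfl
    refine h0.fan a b [c] hnd rfl rfl ?_
    intro τ
    simp [tri, pe]; ring
  | [x], a, b, c, hnd, _ => by
    have h0 := good_tri [] b x c (by simp at hnd ⊢; tauto) (by simp)
    refine h0.fan a b [x, c] (by simp at hnd ⊢; tauto) rfl (by ext z; simp; tauto) ?_
    intro τ
    simp only [tri, pe, List.cons_append, List.nil_append]
    rw [ee_comm c b, ee_comm b x]
    rw [ee_comm x b]
    have e1 : ee b x τ + ee b x τ = 0 := CharTwo.add_self_eq_zero _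
    have e2 : ee x c τ + ee x c τ = 0 := CharTwo.add_self_eq_zero _
    linear_combination -e1 - e2
  | [_, _], _, _, _, _, h => by simp at h
  | [_, _, _], _, _, _, _, h => by simp at h
  | x :: w :: y :: r :: B, v₄, v₂, v₃, hnd, hlen => by
    have h0 := good_tri B y w r (by simp at hnd ⊢; grind) (by simp only [List.length_cons] at hlen; omega)
    have h1 : Good (x :: y :: w :: r :: B).toFinset
        (fun τ => tri y w r τ + pe (x :: w :: (B ++ [y, r]) ++ [x]) τ) :=
      h0.fan x w (B ++ [y, r]) (by simp [List.nodup_append] at hnd ⊢; grind)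
        (by ext z; simp; tauto) (by ext z; simp; tauto) (fun _ => rfl)
    have h2 : Good (v₂ :: x :: y :: w :: r :: B).toFinset
        (fun τ => ee x w τ + ee w y τ + ee y v₂ τ + ee v₂ x τ) := by
      refine h1.fan v₂ x (r :: w :: (B ++ [y])) (by simp [List.nodup_append] at hnd ⊢; grind)
        (by ext z; simp; tauto) (by ext z; simp; tauto) ?_
      intro τ
      have q1 := pe_append (w :: B) y [r, x] τ
      have q2 := pe_append (w :: B) y [v₂] τ
      simp only [List.cons_append, List.nil_append, List.append_assoc, pe, tri] at q1 q2 ⊢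
      rw [q1, q2, ee_comm y w, ee_comm y r, ee_comm w r, ee_comm x r]
      have e1 := CharTwo.add_self_eq_zero (ee r x τ)
      have e2 := CharTwo.add_self_eq_zero (ee r y τ)
      have e3 := CharTwo.add_self_eq_zero (ee r w τ)
      have e4 := CharTwo.add_self_eq_zero (pe (w :: (B ++ [y])) τ)
      linear_combination -e1 - e2 - e3 - e4
    have h3 : Good (v₃ :: v₂ :: x :: y :: w :: r :: B).toFinset
        (fun τ => ee x w τ + ee w y τ + ee y v₂ τ + ee v₂ x τ +
          pe (v₃ :: v₂ :: (y :: r :: (B ++ [x, w])) ++ [v₃]) τ) :=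
      h2.fan v₃ v₂ (y :: r :: (B ++ [x, w])) (by simp [List.nodup_append] at hnd ⊢; grind)
        (by ext z; simp; tauto) (by ext z; simp; tauto) (fun _ => rfl)
    refine h3.fan v₄ v₃ (w :: y :: r :: (B ++ [x, v₂]))
      (by simp [List.nodup_append] at hnd ⊢; grind)
      (by ext z; simp; tauto) (by ext z; simp; tauto) ?_
    intro τ
    have q1 := pe_append (r :: B) x [w, v₃] τ
    have q2 := pe_append (r :: B) x [v₂, v₄] τ
    simp only [List.cons_append, List.nil_append, List.append_assoc, pe, tri] at q1 q2 ⊢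
    rw [q1, q2, ee_comm v₄ v₂, ee_comm v₃ v₄, ee_comm v₃ v₂, ee_comm y v₂, ee_comm x v₂,
      ee_comm w v₃]
    have e1 := CharTwo.add_self_eq_zero (ee x w τ)
    have e2 := CharTwo.add_self_eq_zero (ee w y τ)
    have e3 := CharTwo.add_self_eq_zero (ee v₂ y τ)
    have e4 := CharTwo.add_self_eq_zero (ee v₂ x τ)
    have e5 := CharTwo.add_self_eq_zero (ee y r τ)
    have e6 := CharTwo.add_self_eq_zero (ee v₃ w τ)
    have e7 := CharTwo.add_self_eq_zero (pe (r :: (B ++ [x])) τ)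
    linear_combination -e1 - e2 - e3 - e4 - e5 - e6 - e7

theorem even_card_of_cycle (n : ℕ) (Z : Finset (Finset ℕ)) (hZ : Z ⊆ simplices (rng n) 2)
    (hb : bd Z = ∅) : Even Z.card := by
  rw [bd_eq_empty_iff] at hb
  rw [← ZMod.natCast_eq_zero_iff_even]
  have h0 : ∑ τ ∈ (rng n).powersetCard 2, dg Z τ = 0 := Finset.sum_eq_zero fun τ _ => hb τ
  unfold dg at h0
  rw [Finset.sum_comm] at h0
  rw [← h0, Finset.cast_card]
  refine Finset.sum_congr rfl ?_
  intro σ hσ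
  have hs := hZ hσ
  unfold simplices at hs
  rw [Finset.mem_filter, Finset.mem_powerset] at hs
  rw [Finset.sum_boole]
  have : ((rng n).powersetCard 2).filter (fun τ => τ ⊆ σ ∧ τ.card + 1 = σ.card)
      = σ.powersetCard 2 := by
    ext τ
    simp only [Finset.mem_filter, Finset.mem_powersetCard]
    constructor
    · rintro ⟨⟨_, h⟩, h', _⟩
      exact ⟨h', h⟩
    · rintro ⟨h', h⟩
      exact ⟨⟨h'.trans hs.1, h⟩, h', by omega⟩
  rw [this, Finset.card_powersetCard, hs.2]
  decide

theorem choose_parity (n : ℕ) (hn : 4 ≤ n) (h : Even ((n - 1).choose 2 + 1)) :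
    n % 4 = 0 ∨ n % 4 = 3 := by
  by_contra hcon
  obtain ⟨k, hk⟩ : ∃ k, n = 4 * k + 1 ∨ n = 4 * k + 2 := ⟨n / 4, by omega⟩
  rw [Nat.choose_two_right] at h
  obtain ⟨m, hm⟩ := h
  rcases hk with rfl | rfl
  · obtain ⟨j, rfl⟩ : ∃ j, k = j + 1 := ⟨k - 1, by omega⟩
    have : (4 * (j + 1) + 1 - 1) * (4 * (j + 1) + 1 - 1 - 1) = 2 * (2 * ((j + 1) * (4 * j + 3))) := by
      have e1 : 4 * (j + 1) + 1 - 1 = 4 * j + 4 := by omega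
      have e2 : 4 * j + 4 - 1 = 4 * j + 3 := by omega
      rw [e1, e2]; ring
    omega
  · have : (4 * k + 2 - 1) * (4 * k + 2 - 1 - 1) = 2 * (2 * (k * (4 * k + 1))) := by
      have e1 : 4 * k + 2 - 1 = 4 * k + 1 := by omega
      have e2 : 4 * k + 1 - 1 = 4 * k := by omega
      rw [e1, e2]; ring
    omega

theorem simple_of_good (V : Finset ℕ) (hV : 4 ≤ V.card) (a b c : ℕ) (hab : a ≠ b) (hac : a ≠ c)
    (hbc : b ≠ c) (ha : a ∈ V) (hb : b ∈ V) (hc : c ∈ V) (h : Good V (tri a b c)) :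
    ∃ Z, Z ⊆ simplices V 2 ∧ IsSimpleCycle Z ∧ Z.card = (V.card - 1).choose 2 + 1 := by
  obtain ⟨T, h1, h2, h3, h4⟩ := h
  have hcard : ({a, b, c} : Finset ℕ).card = 3 := Finset.card_eq_three.2 ⟨a, b, c, hab, hac, hbc, rfl⟩
  have hbig : 1 < T.card := by
    rw [h3]
    have : (3 : ℕ).choose 2 ≤ (V.card - 1).choose 2 := Nat.choose_le_choose 2 (by omega)
    have h' : (3 : ℕ).choose 2 = 3 := rfl
    omega
  have hnot : ({a, b, c} : Finset ℕ) ∉ T := by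
    intro hmem
    refine h2 (T.erase {a, b, c}) (Finset.erase_subset _ _) ?_ ?_
    · rw [Ne, ← Finset.card_eq_zero, Finset.card_erase_of_mem hmem]; omega
    · rw [bd_eq_empty_iff]
      intro τ
      have := h4 τ
      rw [← Finset.insert_erase hmem, dg_insert (by simp), faces_tri hab hac hbc] at this
      unfold tri at this
      linear_combination this
  have hcyc : ∀ τ, dg (insert {a, b, c} T) τ = 0 := by
    intro τ
    rw [dg_insert hnot, faces_tri hab hac hbc, h4]
    exact CharTwo.add_self_eq_zero _
  refine ⟨insert {a, b, c} T, ?_, ⟨by simp, (bd_eq_empty_iff _).2 hcyc, ?_⟩, ?_⟩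
  · intro σ hσ
    unfold simplices
    rw [Finset.mem_filter, Finset.mem_powerset]
    rw [Finset.mem_insert] at hσ
    rcases hσ with rfl | hσ
    · refine ⟨?_, hcard⟩
      intro z hz
      simp only [Finset.mem_insert, Finset.mem_singleton] at hz
      rcases hz with rfl | rfl | rfl <;> assumption
    · exact h1 σ hσ
  · intro Y hY hne hbd
    by_cases hm : ({a, b, c} : Finset ℕ) ∈ Y
    · refine h2 (insert {a, b, c} T \ Y) ?_ ?_ ?_
      · intro s hs
        rw [Finset.mem_sdiff] at hs
        exact Finset.mem_of_mem_insert_of_ne hs.1 (fun h => hs.2 (h ▸ hm))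
      · rw [Ne, Finset.sdiff_eq_empty_iff_subset]
        exact hY.2
      · rw [bd_eq_empty_iff] at hbd ⊢
        intro τ
        have := dg_sdiff hY.1 τ
        rw [hbd, hcyc, add_zero] at this
        exact this
    · refine h2 Y ?_ hne hbd
      intro s hs
      exact Finset.mem_of_mem_insert_of_ne (hY.1 hs) (fun h => hm (h ▸ hs))
  · rw [Finset.card_insert_of_notMem hnot, h3]

/-- For `n ≥ 4`, a Hamiltonian 2-cycle on `[n]` over `F_2` (a simple 2-cycle of size
`C(n-1,2) + 1`) exists iff `n ≡ 0` or `3 (mod 4)`. -/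
theorem hamiltonian_two_cycle_iff (n : ℕ) (hn : 4 ≤ n) :
    (∃ Z, Z ⊆ simplices (rng n) 2 ∧ IsSimpleCycle Z ∧
        Z.card = (n - 1).choose 2 + 1) ↔ (n % 4 = 0 ∨ n % 4 = 3) := by
  constructor
  · rintro ⟨Z, hZ, hs, hc⟩
    have := even_card_of_cycle n Z hZ hs.2.1
    rw [hc] at this
    exact choose_parity n hn this
  · intro h
    have hnd : (1 :: 2 :: 3 :: List.range' 4 (n - 3)).Nodup := by
      simp [List.nodup_range', List.mem_range'_1]
    have hset : (1 :: 2 :: 3 :: List.range' 4 (n - 3)).toFinset = rng n := by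
      ext z
      simp only [List.mem_toFinset, List.mem_cons, List.mem_range'_1, rng, Finset.mem_Icc]
      omega
    have hg := good_tri (List.range' 4 (n - 3)) 1 2 3 hnd (by rw [List.length_range']; omega)
    rw [hset] at hg
    have hcard : (rng n).card = n := by simp [rng]
    have := simple_of_good (rng n) (by omega) 1 2 3 (by omega) (by omega) (by omega)
      (by simp [rng]; omega) (by simp [rng]; omega) (by simp [rng]; omega) hg
    rw [hcard] at this
    exact this
end

section
/- For every d ≥ 1 and every n ≥ d+2, there exists a simple d-cycle on [n] over F_2 of size at least C(n-1,d) − C(n-1,d-2) + 1 (with the convention C(m,k) = 0 for k < 0). -/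
open Finset symmDiff

namespace LargeCycle

/-- parity count of the members of `X` having `τ` as a facet -/
def b (X : Finset (Finset ℕ)) (τ : Finset ℕ) : ZMod 2 :=
  ∑ σ ∈ X, if τ ⊆ σ ∧ τ.card + 1 = σ.card then 1 else 0

lemma mem_bd_odd (X : Finset (Finset ℕ)) (τ : Finset ℕ) :
    τ ∈ bd X ↔ Odd (X.filter fun σ => τ ⊆ σ ∧ τ.card + 1 = σ.card).card := by
  unfold bd
  rw [mem_filter, and_iff_right_iff_imp]
  intro h
  obtain ⟨σ, hσ⟩ := Finset.card_pos.1 h.pos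
  rw [mem_filter] at hσ
  exact mem_biUnion.2 ⟨σ, hσ.1, mem_powerset.2 hσ.2.1⟩

lemma mem_bd (X : Finset (Finset ℕ)) (τ : Finset ℕ) : τ ∈ bd X ↔ b X τ = 1 := by
  rw [mem_bd_odd, b, Finset.sum_boole, ZMod.natCast_eq_one_iff_odd]

lemma b_symmDiff (X Y : Finset (Finset ℕ)) (τ : Finset ℕ) :
    b (X ∆ Y) τ = b X τ + b Y τ := by
  unfold b
  generalize hg : (fun σ : Finset ℕ => if τ ⊆ σ ∧ τ.card + 1 = σ.card then (1 : ZMod 2) else 0) = g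
  have hX := Finset.sum_inter_add_sum_sdiff X Y g
  have hY := Finset.sum_inter_add_sum_sdiff Y X g
  rw [← hX, ← hY, symmDiff_def, sup_eq_union, sum_union disjoint_sdiff_sdiff, inter_comm Y X]
  have := CharTwo.add_self_eq_zero (∑ σ ∈ X ∩ Y, g σ)
  linear_combination -this

lemma bd_symmDiff (X Y : Finset (Finset ℕ)) : bd (X ∆ Y) = bd X ∆ bd Y := by
  ext τ
  rw [mem_symmDiff, mem_bd, mem_bd, mem_bd, b_symmDiff]
  generalize b X τ = x
  generalize b Y τ = y
  revert x y
  decide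

lemma bd_empty : bd ∅ = ∅ := by simp [bd]

/-- `X` avoids `v` -/
def Av (v : ℕ) (X : Finset (Finset ℕ)) : Prop := ∀ σ ∈ X, v ∉ σ

lemma av_bd {v : ℕ} {X : Finset (Finset ℕ)} (h : Av v X) : Av v (bd X) := by
  intro τ hτ hv
  simp only [bd, mem_filter, mem_biUnion, mem_powerset] at hτ
  obtain ⟨⟨σ, hσ, hs⟩, -⟩ := hτ
  exact h σ hσ (hs hv)

lemma av_symmDiff {v : ℕ} {X Y : Finset (Finset ℕ)} (h : Av v X) (h' : Av v Y) :
    Av v (X ∆ Y) := by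
  intro τ hτ
  rw [mem_symmDiff] at hτ
  rcases hτ with hτ | hτ
  · exact h τ hτ.1
  · exact h' τ hτ.1

lemma mem_cone_of_not_mem {v : ℕ} {X : Finset (Finset ℕ)} {τ : Finset ℕ} (h : v ∉ τ) :
    τ ∉ cone v X := by
  simp only [cone, mem_image, not_exists, not_and]
  rintro σ - rfl
  exact h (mem_insert_self _ _)

lemma insert_mem_cone {v : ℕ} {X : Finset (Finset ℕ)} (hX : Av v X) {τ : Finset ℕ} (h : v ∉ τ) :
    insert v τ ∈ cone v X ↔ τ ∈ X := by
  simp only [cone, mem_image]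
  constructor
  · rintro ⟨σ, hσ, e⟩
    have : σ = τ := by
      rw [← erase_insert (hX σ hσ), e, erase_insert h]
    exact this ▸ hσ
  · intro h
    exact ⟨τ, h, rfl⟩

lemma card_cone {v : ℕ} {X : Finset (Finset ℕ)} (hX : Av v X) : (cone v X).card = X.card := by
  apply card_image_of_injOn
  intro σ hσ τ hτ e
  rw [← erase_insert (hX σ hσ), e, erase_insert (hX τ hτ)]

lemma sum_cone {v : ℕ} {X : Finset (Finset ℕ)} (hX : Av v X) (g : Finset ℕ → ZMod 2) :
    ∑ σ ∈ cone v X, g σ = ∑ σ ∈ X, g (insert v σ) := by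
  apply sum_image
  intro σ hσ τ hτ e
  rw [← erase_insert (hX σ hσ), e, erase_insert (hX τ hτ)]

lemma bd_cone {v : ℕ} {X : Finset (Finset ℕ)} (hX : Av v X) :
    bd (cone v X) = cone v (bd X) ∆ X := by
  ext τ
  rw [mem_symmDiff, mem_bd, b, sum_cone hX]
  by_cases hv : v ∈ τ
  · obtain ⟨ρ, hρ, rfl⟩ : ∃ ρ, v ∉ ρ ∧ τ = insert v ρ :=
      ⟨τ.erase v, notMem_erase _ _, (insert_erase hv).symm⟩
    have h1 : insert v ρ ∉ X := fun h => hX _ h (mem_insert_self _ _)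
    rw [insert_mem_cone (av_bd hX) hρ, mem_bd, b]
    simp only [h1, not_false_eq_true, and_true, false_and, or_false]
    have : ∀ σ ∈ X, (if insert v ρ ⊆ insert v σ ∧ (insert v ρ).card + 1 = (insert v σ).card
        then (1 : ZMod 2) else 0) = if ρ ⊆ σ ∧ ρ.card + 1 = σ.card then 1 else 0 := by
      intro σ hσ
      rw [card_insert_of_notMem hρ, card_insert_of_notMem (hX σ hσ)]
      simp [insert_subset_insert_iff hρ]
    rw [sum_congr rfl this]
  · have h1 := mem_cone_of_not_mem (X := bd X) hv
    simp only [h1, not_false_eq_true, and_true, false_and, false_or]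
    have : ∀ σ ∈ X, (if τ ⊆ insert v σ ∧ τ.card + 1 = (insert v σ).card
        then (1 : ZMod 2) else 0) = if τ = σ then 1 else 0 := by
      intro σ hσ
      rw [card_insert_of_notMem (hX σ hσ)]
      simp only [subset_insert_iff_of_notMem hv]
      refine if_congr ?_ rfl rfl
      constructor
      · rintro ⟨h, h'⟩
        exact eq_of_subset_of_card_le h (by omega)
      · rintro rfl
        simp
    rw [sum_congr rfl this, sum_ite_eq]
    split_ifs with h <;> simp [h]

/-- `v * G + F` -/
def join (v : ℕ) (G F : Finset (Finset ℕ)) : Finset (Finset ℕ) := cone v G ∆ F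

lemma mem_join_of_not_mem {v : ℕ} {G F : Finset (Finset ℕ)} {τ : Finset ℕ} (h : v ∉ τ) :
    τ ∈ join v G F ↔ τ ∈ F := by
  have := mem_cone_of_not_mem (X := G) h
  simp [join, mem_symmDiff, this]

lemma insert_mem_join {v : ℕ} {G F : Finset (Finset ℕ)} (hG : Av v G) (hF : Av v F)
    {τ : Finset ℕ} (h : v ∉ τ) : insert v τ ∈ join v G F ↔ τ ∈ G := by
  have : insert v τ ∉ F := fun h => hF _ h (mem_insert_self _ _)
  simp [join, mem_symmDiff, this, insert_mem_cone hG h]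

lemma join_empty (v : ℕ) : join v ∅ ∅ = ∅ := by simp [join, cone]

lemma join_inj {v : ℕ} {G F G' F' : Finset (Finset ℕ)} (hG : Av v G) (hF : Av v F)
    (hG' : Av v G') (hF' : Av v F') (e : join v G F = join v G' F') : G = G' ∧ F = F' := by
  constructor
  · ext τ
    by_cases h : v ∈ τ
    · exact ⟨fun k => (hG _ k h).elim, fun k => (hG' _ k h).elim⟩
    · rw [← insert_mem_join hG hF h, e, insert_mem_join hG' hF' h]
  · ext τ
    by_cases h : v ∈ τ
    · exact ⟨fun k => (hF _ k h).elim, fun k => (hF' _ k h).elim⟩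
    · rw [← mem_join_of_not_mem (G := G) h, e, mem_join_of_not_mem h]

lemma bd_join {v : ℕ} {G F : Finset (Finset ℕ)} (hG : Av v G) :
    bd (join v G F) = join v (bd G) (G ∆ bd F) := by
  rw [join, join, bd_symmDiff, bd_cone hG, symmDiff_assoc]

lemma card_join {v : ℕ} {G F : Finset (Finset ℕ)} (hG : Av v G) (hF : Av v F) :
    (join v G F).card = G.card + F.card := by
  have hd : Disjoint (cone v G) F := by
    rw [Finset.disjoint_left]
    intro σ h h'
    exact mem_cone_of_not_mem (hF σ h') h
  rw [join, hd.symmDiff_eq_sup, sup_eq_union, card_union_of_disjoint hd, card_cone hG]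

/-- members without `v` -/
def rest (v : ℕ) (X : Finset (Finset ℕ)) : Finset (Finset ℕ) := X.filter fun σ => v ∉ σ

lemma av_rest (v : ℕ) (X : Finset (Finset ℕ)) : Av v (rest v X) :=
  fun _ h => (mem_filter.1 h).2

lemma mem_link {v : ℕ} {X : Finset (Finset ℕ)} {τ : Finset ℕ} :
    τ ∈ link v X ↔ v ∉ τ ∧ insert v τ ∈ X := by
  simp only [link, mem_image, mem_filter]
  constructor
  · rintro ⟨σ, ⟨h, h'⟩, rfl⟩
    exact ⟨notMem_erase _ _, by rwa [insert_erase h']⟩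
  · rintro ⟨h, h'⟩
    exact ⟨insert v τ, ⟨h', mem_insert_self _ _⟩, erase_insert h⟩

lemma av_link (v : ℕ) (X : Finset (Finset ℕ)) : Av v (link v X) :=
  fun _ h => (mem_link.1 h).1

lemma join_link_rest (v : ℕ) (X : Finset (Finset ℕ)) : join v (link v X) (rest v X) = X := by
  ext τ
  by_cases hv : v ∈ τ
  · obtain ⟨ρ, hρ, rfl⟩ : ∃ ρ, v ∉ ρ ∧ τ = insert v ρ :=
      ⟨τ.erase v, notMem_erase _ _, (insert_erase hv).symm⟩
    rw [insert_mem_join (av_link _ _) (av_rest _ _) hρ, mem_link]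
    simp [hρ]
  · rw [mem_join_of_not_mem hv, rest, mem_filter]
    simp [hv]

lemma exists_join (v : ℕ) {X : Finset (Finset ℕ)} :
    ∃ G F, Av v G ∧ Av v F ∧ X = join v G F :=
  ⟨_, _, av_link v X, av_rest v X, (join_link_rest v X).symm⟩

lemma join_subset {v : ℕ} {G F G' F' : Finset (Finset ℕ)} (hG : Av v G) (hF : Av v F)
    (hG' : Av v G') (hF' : Av v F') (h : join v G F ⊆ join v G' F') : G ⊆ G' ∧ F ⊆ F' := by
  constructor
  · intro τ k
    have hv := hG _ k
    rw [← insert_mem_join hG' hF' hv]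
    exact h ((insert_mem_join hG hF hv).2 k)
  · intro τ k
    have hv := hF _ k
    rw [← mem_join_of_not_mem (G := G') hv]
    exact h ((mem_join_of_not_mem hv).2 k)

lemma bd_join_eq_empty {v : ℕ} {G F : Finset (Finset ℕ)} (hG : Av v G) (hF : Av v F)
    (h : bd (join v G F) = ∅) : bd G = ∅ ∧ bd F = G := by
  rw [bd_join hG, ← join_empty v] at h
  obtain ⟨h1, h2⟩ := join_inj (av_bd hG) (av_symmDiff hG (av_bd hF)) (by simp [Av]) (by simp [Av]) h
  refine ⟨h1, ?_⟩
  exact (symmDiff_eq_bot.1 h2).symm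

lemma acyclic_join {v : ℕ} {G F : Finset (Finset ℕ)} (hG : Av v G) (hF : Av v F)
    (aG : IsAcyclic G) (aF : IsAcyclic F) : IsAcyclic (join v G F) := by
  intro Y hY hne hbd
  obtain ⟨A, B, hA, hB, rfl⟩ := exists_join v (X := Y)
  obtain ⟨h1, h2⟩ := join_subset hA hB hG hF hY
  obtain ⟨h3, h4⟩ := bd_join_eq_empty hA hB hbd
  have h5 : A = ∅ := by
    by_contra h
    exact aG A h1 h h3
  subst h5
  have h6 : B = ∅ := by
    by_contra h
    exact aF B h2 h h4
  subst h6
  exact hne (join_empty v)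

/-- all members are `k`-subsets of `V` -/
def Fam (V : Finset ℕ) (k : ℕ) (X : Finset (Finset ℕ)) : Prop :=
  ∀ σ ∈ X, σ ⊆ V ∧ σ.card = k

lemma Fam.av {V : Finset ℕ} {k v : ℕ} {X : Finset (Finset ℕ)} (h : Fam (V.erase v) k X) :
    Av v X := fun σ hσ hv => notMem_erase v V ((h σ hσ).1 hv)

lemma Fam.symmDiff {V : Finset ℕ} {k : ℕ} {X Y : Finset (Finset ℕ)} (h : Fam V k X)
    (h' : Fam V k Y) : Fam V k (X ∆ Y) := by
  intro τ hτ
  rw [mem_symmDiff] at hτ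
  rcases hτ with hτ | hτ
  · exact h τ hτ.1
  · exact h' τ hτ.1

lemma Fam.join {V : Finset ℕ} {k v : ℕ} {G F : Finset (Finset ℕ)} (hv : v ∈ V)
    (hG : Fam (V.erase v) k G) (hF : Fam (V.erase v) (k + 1) F) : Fam V (k + 1) (join v G F) := by
  intro τ hτ
  by_cases hv' : v ∈ τ
  · obtain ⟨ρ, hρ, rfl⟩ : ∃ ρ, v ∉ ρ ∧ τ = insert v ρ :=
      ⟨τ.erase v, notMem_erase _ _, (insert_erase hv').symm⟩
    rw [insert_mem_join hG.av hF.av hρ] at hτ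
    obtain ⟨h1, h2⟩ := hG ρ hτ
    refine ⟨insert_subset hv (h1.trans (erase_subset _ _)), ?_⟩
    rw [card_insert_of_notMem hρ, h2]
  · rw [mem_join_of_not_mem hv'] at hτ
    exact ⟨(hF τ hτ).1.trans (erase_subset _ _), (hF τ hτ).2⟩

lemma Fam.of_join {V : Finset ℕ} {k v : ℕ} {G F : Finset (Finset ℕ)} (aG : Av v G) (aF : Av v F)
    (h : Fam V (k + 1) (LargeCycle.join v G F)) : Fam (V.erase v) k G ∧ Fam (V.erase v) (k + 1) F := by
  constructor
  · intro τ hτ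
    have hv := aG τ hτ
    obtain ⟨h1, h2⟩ := h _ ((insert_mem_join aG aF hv).2 hτ)
    rw [card_insert_of_notMem hv] at h2
    refine ⟨subset_erase.2 ⟨(subset_insert _ _).trans h1, hv⟩, by omega⟩
  · intro τ hτ
    have hv := aF τ hτ
    obtain ⟨h1, h2⟩ := h _ ((mem_join_of_not_mem hv).2 hτ)
    exact ⟨subset_erase.2 ⟨h1, hv⟩, h2⟩

/-- the target size -/
def f (m d : ℕ) : ℤ :=
  ((m - 1).choose d : ℤ) - (if 2 ≤ d then ((m - 1).choose (d - 2) : ℤ) else 0)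

lemma f_pascal (m d : ℕ) (hm : 1 ≤ m) : f (m + 1) (d + 1) = f m d + f m (d + 1) := by
  obtain ⟨k, rfl⟩ : ∃ k, m = k + 1 := ⟨m - 1, by omega⟩
  unfold f
  simp only [Nat.add_sub_cancel]
  rw [Nat.choose_succ_succ k d]
  rcases d with _ | _ | d
  · simp
  · simp; ring
  · have : k + 1 = k.succ := rfl
    simp [Nat.choose_succ_succ k d]; ring

lemma f_nonpos (m d : ℕ) (hm : 1 ≤ m) (h : m + 1 ≤ 2 * (d + 1)) : f m (d + 1) ≤ 0 := by
  obtain ⟨N, rfl⟩ : ∃ k, m = k + 1 := ⟨m - 1, by omega⟩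
  unfold f
  simp only [Nat.add_sub_cancel]
  rcases d with _ | d
  · have : N = 0 := by omega
    subst this
    simp
  · have h2 : 2 ≤ d + 1 + 1 := by omega
    rw [if_pos h2]
    have key : N.choose (d + 2) ≤ N.choose d := by
      have e1 := Nat.choose_succ_right_eq N (d + 1)
      have e2 := Nat.choose_succ_right_eq N d
      have l1 : N.choose (d + 1 + 1) * (d + 2) ≤ N.choose (d + 1) * (d + 1) := by
        rw [e1]
        exact Nat.mul_le_mul_left _ (by omega)
      have l2 : N.choose (d + 1) * (d + 1) ≤ N.choose d * (d + 2) := by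
        rw [e2]
        exact Nat.mul_le_mul_left _ (by omega)
      exact Nat.le_of_mul_le_mul_right (l1.trans l2) (by omega)
    have : d + 1 + 1 - 2 = d := by omega
    rw [this]
    have : (N.choose (d + 1 + 1) : ℤ) ≤ N.choose d := by exact_mod_cast key
    linarith

/-- `F` is a large acyclic filling of `Z` on `V` -/
def Good (V : Finset ℕ) (d : ℕ) (Z F : Finset (Finset ℕ)) : Prop :=
  Fam V (d + 1) F ∧ IsAcyclic F ∧ bd F = Z ∧ f V.card d ≤ F.card

/-- guaranteed number of fillings -/
def kk (m d : ℕ) : ℕ := if 2 * d + 3 ≤ m then 3 else if 2 * d + 2 ≤ m then 2 else 1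

lemma good_join {V : Finset ℕ} {d v : ℕ} (hv : v ∈ V) (hV : 2 ≤ V.card)
    {W H G F : Finset (Finset ℕ)}
    (hG : Good (V.erase v) d W G) (hF : Good (V.erase v) (d + 1) (G ∆ H) F) :
    Good V (d + 1) (join v W H) (join v G F) := by
  obtain ⟨g1, g2, g3, g4⟩ := hG
  obtain ⟨f1, f2, f3, f4⟩ := hF
  refine ⟨Fam.join hv g1 f1, acyclic_join g1.av f1.av g2 f2, ?_, ?_⟩
  · rw [bd_join g1.av, g3, f3, symmDiff_symmDiff_cancel_left]
  · rw [card_join g1.av f1.av]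
    rw [card_erase_of_mem hv] at g4 f4
    obtain ⟨m, hm⟩ : ∃ m, V.card = m + 1 := ⟨V.card - 1, by omega⟩
    rw [hm] at g4 f4 ⊢
    rw [f_pascal m d (by omega)]
    simp only [Nat.add_sub_cancel] at g4 f4
    push_cast
    linarith

lemma b_singleton_bd (v : ℕ) : bd {{v}} ≠ ∅ := by
  have : ∅ ∈ bd {{v}} := by
    rw [mem_bd, b, sum_singleton]
    simp
  intro h
  rw [h] at this
  simp at this

lemma isAcyclic_singleton (v : ℕ) : IsAcyclic {{v}} := by
  intro Y hY hne
  rcases subset_singleton_iff.1 hY with h | h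
  · exact (hne h).elim
  · rw [h]; exact b_singleton_bd v

lemma bd_point (v : ℕ) : bd {{v}} = {∅} := by
  have := bd_cone (v := v) (X := {∅}) (by simp [Av])
  have e : bd {∅} = ∅ := by
    ext τ
    rw [mem_bd, b, sum_singleton]
    simp
  have e2 : cone v {∅} = {{v}} := by simp [cone]
  have e3 : cone v ∅ = ∅ := by simp [cone]
  rw [e, e2, e3] at this
  rw [this]
  exact bot_symmDiff _

lemma main_fill (m : ℕ) : ∀ (d : ℕ) (V : Finset ℕ) (Z : Finset (Finset ℕ)), V.card = m → 1 ≤ m →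
    Fam V d Z → Z ≠ ∅ → bd Z = ∅ →
    ∃ S : Finset (Finset (Finset ℕ)), (∀ F ∈ S, Good V d Z F) ∧ kk m d ≤ S.card := by
  induction m with
  | zero => intro d V Z _ h; omega
  | succ m ih =>
  intro d V Z hVm _ hZ hne hbd
  rcases d with _ | d
  · have hZ0 : Z = {∅} := by
      refine eq_singleton_iff_nonempty_unique_mem.2 ⟨nonempty_iff_ne_empty.2 hne, ?_⟩
      intro σ hσ
      exact card_eq_zero.1 (hZ σ hσ).2
    subst hZ0
    refine ⟨V.image fun v => {{v}}, ?_, ?_⟩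
    · intro F hF
      obtain ⟨v, hv, rfl⟩ := mem_image.1 hF
      refine ⟨?_, isAcyclic_singleton v, bd_point v, ?_⟩
      · intro σ hσ
        rw [mem_singleton] at hσ
        subst hσ
        simpa using hv
      · simp [f]
    · rw [card_image_of_injective _ (by intro a c h; simpa using h), hVm]
      unfold kk
      split_ifs <;> omega
  · -- choose a vertex
    obtain ⟨σ, hσ⟩ := nonempty_iff_ne_empty.2 hne
    obtain ⟨hσV, hσc⟩ := hZ σ hσ
    obtain ⟨v, hvσ⟩ := Finset.card_pos.1 (by omega : 0 < σ.card)
    have hv := hσV hvσ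
    have hm : 1 ≤ m := by
      by_contra hm
      have hV1 : V.card = 1 := by omega
      obtain ⟨w, rfl⟩ := card_eq_one.1 hV1
      apply b_singleton_bd w
      have : Z = {{w}} := by
        refine eq_singleton_iff_nonempty_unique_mem.2 ⟨nonempty_iff_ne_empty.2 hne, ?_⟩
        intro ρ hρ
        obtain ⟨h1, h2⟩ := hZ ρ hρ
        rcases subset_singleton_iff.1 h1 with h | h
        · rw [h] at h2; simp at h2
        · exact h
      rw [← this, hbd]
    have hcard : (V.erase v).card = m := by rw [card_erase_of_mem hv, hVm]; omega
    obtain ⟨W, H, aW, aH, rfl⟩ := exists_join v (X := Z)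
    obtain ⟨fW, fH⟩ := hZ.of_join aW aH
    obtain ⟨bW, bH⟩ := bd_join_eq_empty aW aH hbd
    have hWne : W ≠ ∅ := by
      have : insert v (σ.erase v) ∈ join v W H := by rwa [insert_erase hvσ]
      rw [insert_mem_join aW aH (notMem_erase _ _)] at this
      exact ne_empty_of_mem this
    obtain ⟨S, hS, hSc⟩ := ih d (V.erase v) W hcard hm fW hWne bW
    have hT : ∀ G, G ∈ S.erase H → ∃ T : Finset (Finset (Finset ℕ)),
        (∀ F ∈ T, Good (V.erase v) (d + 1) (G ∆ H) F) ∧ kk m (d + 1) ≤ T.card := by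
      intro G hG
      obtain ⟨hGH, hGS⟩ := mem_erase.1 hG
      obtain ⟨g1, g2, g3, g4⟩ := hS G hGS
      refine ih (d + 1) (V.erase v) (G ∆ H) hcard hm (g1.symmDiff fH) ?_ ?_
      · intro h
        exact hGH (symmDiff_eq_bot.1 h)
      · rw [bd_symmDiff, g3, bH]; exact symmDiff_self W
    choose! T hT1 hT2 using hT
    have hVc : 2 ≤ V.card := by omega
    by_cases hsmall : m + 1 ≤ 2 * (d + 1)
    · have hk : kk (m + 1) (d + 1) = 1 := by
        unfold kk
        rw [if_neg (by omega), if_neg (by omega)]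
      have hpos : ∀ a c, 1 ≤ kk a c := by
        intro a c
        unfold kk
        split_ifs <;> omega
      rw [hk]
      obtain ⟨G, hG⟩ := Finset.card_pos.1 (lt_of_lt_of_le (hpos m d) hSc)
      by_cases hGH : G = H
      · refine ⟨{join v G ∅}, ?_, by simp⟩
        intro F hF
        rw [mem_singleton] at hF
        subst hF
        refine good_join hv hVc (hS G hG) ⟨by simp [Fam], ?_, ?_, ?_⟩
        · intro Y hY hY'
          exact (hY' (subset_empty.1 hY)).elim
        · rw [hGH, bd_empty]; exact (symmDiff_self H).symm
        · rw [hcard]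
          simpa using f_nonpos m d hm hsmall
      · have hG' : G ∈ S.erase H := mem_erase.2 ⟨hGH, hG⟩
        obtain ⟨F, hF⟩ := Finset.card_pos.1 (lt_of_lt_of_le (hpos m (d + 1)) (hT2 G hG'))
        refine ⟨{join v G F}, ?_, by simp⟩
        intro F' hF'
        rw [mem_singleton] at hF'
        subst hF'
        exact good_join hv hVc (hS G hG) (hT1 G hG' F hF)
    · refine ⟨((S.erase H).sigma T).image fun p => join v p.1 p.2, ?_, ?_⟩
      · intro F hF
        obtain ⟨⟨G, F'⟩, hp, rfl⟩ := mem_image.1 hF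
        obtain ⟨h1, h2⟩ := mem_sigma.1 hp
        exact good_join hv hVc (hS G (mem_of_mem_erase h1)) (hT1 G h1 F' h2)
      · rw [card_image_of_injOn, card_sigma]
        · have h1 : (S.erase H).card * kk m (d + 1) ≤ ∑ G ∈ S.erase H, (T G).card := by
            rw [← smul_eq_mul]
            exact card_nsmul_le_sum _ _ _ hT2
          have h2 : kk m d - 1 ≤ (S.erase H).card :=
            (Nat.sub_le_sub_right hSc 1).trans pred_card_le_card_erase
          refine le_trans ?_ ((Nat.mul_le_mul_right _ h2).trans h1)
          unfold kk
          split_ifs <;> omega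
        · rintro ⟨G, F⟩ hp ⟨G', F'⟩ hp' e
          obtain ⟨h1, h2⟩ := mem_sigma.1 hp
          obtain ⟨h1', h2'⟩ := mem_sigma.1 hp'
          simp only at e h1 h2 h1' h2'
          obtain ⟨e1, e2⟩ := join_inj (hS G (mem_of_mem_erase h1)).1.av (hT1 G h1 F h2).1.av
            (hS G' (mem_of_mem_erase h1')).1.av (hT1 G' h1' F' h2').1.av e
          subst e1 e2
          rfl

lemma simple_join {v : ℕ} {G F : Finset (Finset ℕ)} (hG : Av v G) (hF : Av v F)
    (sG : IsSimpleCycle G) (aF : IsAcyclic F) (hbd : bd F = G) : IsSimpleCycle (join v G F) := by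
  obtain ⟨s1, s2, s3⟩ := sG
  refine ⟨?_, ?_, ?_⟩
  · intro h
    rw [← join_empty v] at h
    exact s1 (join_inj hG hF (by simp [Av]) (by simp [Av]) h).1
  · rw [bd_join hG, s2, hbd, symmDiff_self]
    exact join_empty v
  · intro Y hY hne hY0
    obtain ⟨A, B, hA, hB, rfl⟩ := exists_join v (X := Y)
    obtain ⟨h1, h2⟩ := join_subset hA hB hG hF hY.1
    obtain ⟨h3, h4⟩ := bd_join_eq_empty hA hB hY0
    by_cases hA0 : A = ∅
    · subst hA0
      have h6 : B = ∅ := by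
        by_contra h
        exact aF B h2 h h4
      subst h6
      exact hne (join_empty v)
    · have hAG : A = G := by
        by_contra h
        exact s3 A (ssubset_of_subset_of_ne h1 h) hA0 h3
      subst hAG
      have hBF : B = F := by
        by_contra h
        refine aF (B ∆ F) ?_ ?_ ?_
        · intro τ hτ
          rw [mem_symmDiff] at hτ
          rcases hτ with hτ | hτ
          · exact h2 hτ.1
          · exact hτ.1
        · intro h'
          exact h (symmDiff_eq_bot.1 h')
        · rw [bd_symmDiff, h4, hbd]; exact symmDiff_self A
      subst hBF
      exact hY.2 (Subset.refl _)

lemma main_cycle (d : ℕ) : ∀ V : Finset ℕ, d + 2 ≤ V.card →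
    ∃ Z, Fam V (d + 1) Z ∧ IsSimpleCycle Z ∧ f V.card d + 1 ≤ Z.card := by
  induction d with
  | zero =>
    intro V hV
    obtain ⟨a, ha, c, hc, hac⟩ := Finset.one_lt_card.1 (by omega : 1 < V.card)
    have hd : Disjoint ({{a}} : Finset (Finset ℕ)) {{c}} := by simpa using hac
    have e : ({{a}, {c}} : Finset (Finset ℕ)) = {{a}} ∆ {{c}} := by
      rw [hd.symmDiff_eq_sup]; rfl
    refine ⟨{{a}, {c}}, ?_, ⟨by simp, ?_, ?_⟩, ?_⟩
    · intro σ hσ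
      simp only [mem_insert, mem_singleton] at hσ
      rcases hσ with rfl | rfl
      · simpa using ha
      · simpa using hc
    · rw [e, bd_symmDiff, bd_point, bd_point]; exact symmDiff_self _
    · intro Y hY hne
      have hcard : Y.card < 2 := lt_of_lt_of_le (card_lt_card hY) card_le_two
      have hpos := Finset.card_pos.2 (nonempty_iff_ne_empty.2 hne)
      obtain ⟨σ, rfl⟩ := card_eq_one.1 (by omega : Y.card = 1)
      have := hY.1 (mem_singleton_self σ)
      simp only [mem_insert, mem_singleton] at this
      rcases this with rfl | rfl
      · exact b_singleton_bd _
      · exact b_singleton_bd _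
    · rw [card_pair (by simpa using hac)]
      simp [f]
  | succ d ih =>
    intro V hV
    obtain ⟨v, hv⟩ := Finset.card_pos.1 (by omega : 0 < V.card)
    have hc : (V.erase v).card = V.card - 1 := card_erase_of_mem hv
    obtain ⟨G, g1, g2, g3⟩ := ih (V.erase v) (by omega)
    obtain ⟨S, hS, hSc⟩ := main_fill (V.erase v).card (d + 1) (V.erase v) G rfl (by omega) g1 g2.1
      g2.2.1
    obtain ⟨F, hF⟩ : S.Nonempty := by
      apply Finset.card_pos.1
      refine lt_of_lt_of_le ?_ hSc
      unfold kk
      split_ifs <;> omega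
    obtain ⟨f1, f2, f3, f4⟩ := hS F hF
    refine ⟨join v G F, Fam.join hv g1 f1, simple_join g1.av f1.av g2 f2 f3, ?_⟩
    rw [card_join g1.av f1.av]
    obtain ⟨m, hm⟩ : ∃ m, V.card = m + 1 := ⟨V.card - 1, by omega⟩
    rw [hc, hm] at g3 f4
    rw [hm, f_pascal m d (by omega)]
    simp only [Nat.add_sub_cancel] at g3 f4
    push_cast
    linarith

end LargeCycle

theorem exists_large_simple_cycle (d n : ℕ) (hd : 1 ≤ d) (hn : d + 2 ≤ n) :
    ∃ Z, Z ⊆ simplices (rng n) d ∧ IsSimpleCycle Z ∧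
      ((n - 1).choose d : ℤ) - (if 2 ≤ d then ((n - 1).choose (d - 2) : ℤ) else 0) + 1 ≤
        (Z.card : ℤ) := by
  have hc : (rng n).card = n := by simp [rng]
  obtain ⟨Z, h1, h2, h3⟩ := LargeCycle.main_cycle d (rng n) (by omega)
  rw [hc] at h3
  refine ⟨Z, ?_, h2, h3⟩
  intro σ hσ
  simpa [simplices] using h1 σ hσ
end
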